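/- arXiv:math/0701399 — 2 statements merged into one kernel-verified Lean document; each statement's English description precedes it below -/
import Mathlib

section
/- Let F be an associative algebra (not necessarily unital) over a field k of characteristic 0. Then for all k, k' ≥ 0 and ℓ, ℓ' ≥ 1: (a) I_k^ℓ(F)·I_{k'}^{ℓ'}(F) ⊆ I_{k+k'}^{ℓ+ℓ'}(F) and I_k^{≤ℓ}(F)·I_{k'}^{≤ℓ'}(F) ⊆ I_{k+k'}^{≤ℓ+ℓ'}(F); (b) [I_k^ℓ(F), I_{k'}^{ℓ'}(F)] ⊆ [F, I_{k+k'}^{ℓ+ℓ'−1}(F)] and [I_k^{≤ℓ}(F), I_{k'}^{≤ℓ'}(F)] ⊆ [F, I_{k+k'}^{≤ℓ+ℓ'−1}(F)]. -/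
open Submodule TensorProduct

variable (K : Type*) [Field K]

/-- The span of all products `a * b`, `a ∈ S`, `b ∈ T` (the subspace `S·T`). -/
def pSpan {R : Type*} [NonUnitalRing R] [Module K R] (S T : Submodule K R) : Submodule K R :=
  Submodule.span K {x | ∃ a ∈ S, ∃ b ∈ T, x = a * b}

/-- The span of all commutators `a * b - b * a`, `a ∈ S`, `b ∈ T` (the subspace `[S, T]`). -/
def bSpan {R : Type*} [NonUnitalRing R] [Module K R] (S T : Submodule K R) : Submodule K R :=
  Submodule.span K {x | ∃ a ∈ S, ∃ b ∈ T, x = a * b - b * a}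

/-- The `k`-th commutator space `S^(k)`: `S^(0) = S`, `S^(k) = [S, S^(k-1)]`.
For `S = ⊤` this is the commutator space `F^(k)` of the algebra. -/
def cSp {R : Type*} [NonUnitalRing R] [Module K R] (S : Submodule K R) : ℕ → Submodule K R
  | 0 => S
  | (k+1) => bSpan K S (cSp S k)

/-- `IklS K S ℓ k` is `I_k^ℓ(R, S)`: the sum of `S^(λ₁) ⋯ S^(λ_ℓ)` over
`λ₁ + ⋯ + λ_ℓ = k`, defined via the recursion `I_k^1 = S^(k)`,
`I_k^ℓ = Σ_{0 ≤ i ≤ k} S^(i) · I_{k-i}^{ℓ-1}`.  The first argument is the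
superscript `ℓ`, the second the subscript `k`; the (unused) value at `ℓ = 0` is `⊥`.
For `S = ⊤` this is `I_k^ℓ(F)`. -/
def IklS {R : Type*} [NonUnitalRing R] [Module K R] (S : Submodule K R) :
    ℕ → ℕ → Submodule K R
  | 0, _ => ⊥
  | 1, k => cSp K S k
  | (ℓ+2), k => ∑ i ∈ Finset.range (k+1), pSpan K (cSp K S i) (IklS S (ℓ+1) (k-i))

/-- `I_k^{≤ℓ}(F) = Σ_{1 ≤ ℓ' ≤ ℓ} I_k^{ℓ'}(F)`. -/
def Ikle {R : Type*} [NonUnitalRing R] [Module K R] (ℓ k : ℕ) : Submodule K R :=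
  ∑ ℓ' ∈ Finset.Icc 1 ℓ, IklS K (⊤ : Submodule K R) ℓ' k

/-- `I_k(F) = Σ_{ℓ ≥ 1} I_k^ℓ(F)`. -/
def Ik (R : Type*) [NonUnitalRing R] [Module K R] (k : ℕ) : Submodule K R :=
  ⨆ ℓ : ℕ, IklS K (⊤ : Submodule K R) (ℓ + 1) k

/-- `g^n`: the span of all products of `n` elements of `g` (set to `⊥` for `n = 0`). -/
def gPow {R : Type*} [NonUnitalRing R] [Module K R] (g : Submodule K R) : ℕ → Submodule K R
  | 0 => ⊥
  | 1 => g
  | (n+2) => pSpan K g (gPow g (n+1))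

/-- The Lie subalgebra (under the commutator bracket) generated by a subspace `S`:
the smallest subspace containing `S` and closed under `(x, y) ↦ x * y - y * x`. -/
def lieGen {R : Type*} [NonUnitalRing R] [Module K R] (S : Submodule K R) : Submodule K R :=
  sInf {T | S ≤ T ∧ ∀ x ∈ T, ∀ y ∈ T, x * y - y * x ∈ T}

/-- The subspace `S ⊗ T` of `F ⊗[K] A`: the span of all pure tensors `f ⊗ a`
with `f ∈ S`, `a ∈ T`. -/
def tSpan {F A : Type*} [AddCommGroup F] [Module K F] [AddCommGroup A] [Module K A]
    (S : Submodule K F) (T : Submodule K A) : Submodule K (F ⊗[K] A) :=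
  Submodule.span K {z | ∃ f ∈ S, ∃ a ∈ T, z = f ⊗ₜ[K] a}

/-- The current Lie algebra `(g, A)(F)`: the Lie subalgebra of `F ⊗ A` (with the
commutator bracket) generated by `F ⊗ g`. -/
def currentLie {F A : Type*} [NonUnitalRing F] [Module K F] [SMulCommClass K F F]
    [IsScalarTower K F F] [Ring A] [Algebra K A] (g : Submodule K A) :
    Submodule K (F ⊗[K] A) :=
  lieGen K (tSpan K (⊤ : Submodule K F) g)

/-!
Beyond associativity, three identities for `[a, b] = a * b - b * a` give all the inclusions:

* the Leibniz rule `[a, b * c] = [a, b] * c + b * [a, c]` gives `[S, I_k^ℓ] ⊆ I_{k+1}^ℓ`;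
* the Jacobi identity `[[a, b], c] = [a, [b, c]] - [b, [a, c]]` then moves brackets from a
  commutator space onto the other factor, so that `[S^(j), I_k^ℓ] ⊆ [S, I_{j+k}^ℓ]`;
* the cyclic identity `[a * b, c] = [a, b * c] + [b, c * a]` splits a product on the left, and
  induction on its number of factors reduces `[I_k^ℓ, I_k'^ℓ']` to the case `ℓ = 1`.
-/

section Submodule

theorem finsetSum_submodule_eq_iSup {R M ι : Type*} [Semiring R] [AddCommMonoid M] [Module R M]
    (s : Finset ι) (f : ι → Submodule R M) : ∑ i ∈ s, f i = ⨆ i ∈ s, f i := by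
  classical
  induction s using Finset.induction_on with
  | empty => simp
  | insert a s ha ih => rw [Finset.sum_insert ha, ih, Finset.iSup_insert, Submodule.add_eq_sup]

variable {R M N P Q X : Type*} [CommSemiring R] [AddCommMonoid M] [AddCommMonoid N]
  [AddCommMonoid P] [AddCommMonoid Q] [AddCommMonoid X] [Module R M] [Module R N] [Module R P]
  [Module R Q] [Module R X]

theorem map₂_map₂_right_le_iff {f : M →ₗ[R] P →ₗ[R] Q} {g : N →ₗ[R] X →ₗ[R] P}
    {S : Submodule R M} {T : Submodule R N} {U : Submodule R X} {V : Submodule R Q} :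
    map₂ f S (map₂ g T U) ≤ V ↔ ∀ a ∈ S, ∀ b ∈ T, ∀ c ∈ U, f a (g b c) ∈ V := by
  have hcomap (a : M) : (∀ x ∈ map₂ g T U, f a x ∈ V) ↔ ∀ b ∈ T, ∀ c ∈ U, f a (g b c) ∈ V :=
    map₂_le (q := U) (r := V.comap (f a))
  simp only [map₂_le, hcomap]

theorem map₂_map₂_left_le_iff {f : P →ₗ[R] X →ₗ[R] Q} {g : M →ₗ[R] N →ₗ[R] P}
    {S : Submodule R M} {T : Submodule R N} {U : Submodule R X} {V : Submodule R Q} :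
    map₂ f (map₂ g S T) U ≤ V ↔ ∀ a ∈ S, ∀ b ∈ T, ∀ c ∈ U, f (g a b) c ∈ V := by
  rw [← map₂_flip, map₂_map₂_right_le_iff]
  exact ⟨fun h a ha b hb c hc => h c hc a ha b hb, fun h c hc a ha b hb => h a ha b hb c hc⟩

end Submodule

section ProductAndCommutatorSpans

variable {K}
variable {F : Type*} [NonUnitalRing F] [Module K F]

theorem pSpan_mono {S S' T T' : Submodule K F} (hS : S ≤ S') (hT : T ≤ T') :
    pSpan K S T ≤ pSpan K S' T' :=
  span_mono fun _ ⟨a, ha, b, hb, hab⟩ => ⟨a, hS ha, b, hT hb, hab⟩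

theorem bSpan_mono {S S' T T' : Submodule K F} (hS : S ≤ S') (hT : T ≤ T') :
    bSpan K S T ≤ bSpan K S' T' :=
  span_mono fun _ ⟨a, ha, b, hb, hab⟩ => ⟨a, hS ha, b, hT hb, hab⟩

theorem mul_mem_pSpan {S T : Submodule K F} {a b : F} (ha : a ∈ S) (hb : b ∈ T) :
    a * b ∈ pSpan K S T :=
  subset_span ⟨a, ha, b, hb, rfl⟩

theorem commutator_mem_bSpan {S T : Submodule K F} {a b : F} (ha : a ∈ S) (hb : b ∈ T) :
    a * b - b * a ∈ bSpan K S T :=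
  subset_span ⟨a, ha, b, hb, rfl⟩

variable [SMulCommClass K F F] [IsScalarTower K F F]

variable (K F) in
/-- The commutator `(a, b) ↦ a * b - b * a` as a bilinear map, which presents the spans `bSpan` as
instances of `Submodule.map₂`. -/
def commutatorBilin : F →ₗ[K] F →ₗ[K] F :=
  LinearMap.mul K F - (LinearMap.mul K F).flip

theorem commutatorBilin_apply (a b : F) : commutatorBilin K F a b = a * b - b * a :=
  rfl

theorem pSpan_eq_map₂ (S T : Submodule K F) : pSpan K S T = map₂ (LinearMap.mul K F) S T := by
  simp only [pSpan, map₂_eq_span_image2, Set.image2, LinearMap.mul_apply', SetLike.mem_coe, eq_comm]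

theorem bSpan_eq_map₂ (S T : Submodule K F) : bSpan K S T = map₂ (commutatorBilin K F) S T := by
  simp only [bSpan, map₂_eq_span_image2, Set.image2, commutatorBilin_apply, SetLike.mem_coe,
    eq_comm]

theorem pSpan_iSup_left {ι : Sort*} (S : ι → Submodule K F) (T : Submodule K F) :
    pSpan K (⨆ i, S i) T = ⨆ i, pSpan K (S i) T := by
  simp only [pSpan_eq_map₂, map₂_iSup_left]

theorem pSpan_iSup_right {ι : Sort*} (S : Submodule K F) (T : ι → Submodule K F) :
    pSpan K S (⨆ i, T i) = ⨆ i, pSpan K S (T i) := by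
  simp only [pSpan_eq_map₂, map₂_iSup_right]

theorem bSpan_iSup_left {ι : Sort*} (S : ι → Submodule K F) (T : Submodule K F) :
    bSpan K (⨆ i, S i) T = ⨆ i, bSpan K (S i) T := by
  simp only [bSpan_eq_map₂, map₂_iSup_left]

theorem bSpan_iSup_right {ι : Sort*} (S : Submodule K F) (T : ι → Submodule K F) :
    bSpan K S (⨆ i, T i) = ⨆ i, bSpan K S (T i) := by
  simp only [bSpan_eq_map₂, map₂_iSup_right]

theorem pSpan_pSpan_le (S T U : Submodule K F) :
    pSpan K (pSpan K S T) U ≤ pSpan K S (pSpan K T U) := by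
  rw [pSpan_eq_map₂ (pSpan K S T), pSpan_eq_map₂ S T, map₂_map₂_left_le_iff]
  intro a ha b hb c hc
  simp only [LinearMap.mul_apply', mul_assoc]
  exact mul_mem_pSpan ha (mul_mem_pSpan hb hc)

theorem bSpan_pSpan_right_le (S T U : Submodule K F) :
    bSpan K S (pSpan K T U) ≤ pSpan K (bSpan K S T) U ⊔ pSpan K T (bSpan K S U) := by
  rw [bSpan_eq_map₂ S (pSpan K T U), pSpan_eq_map₂ T U, map₂_map₂_right_le_iff]
  intro a ha b hb c hc
  have leibniz : a * (b * c) - b * c * a = (a * b - b * a) * c + b * (a * c - c * a) := by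
    noncomm_ring
  rw [LinearMap.mul_apply', commutatorBilin_apply, leibniz]
  exact add_mem_sup (mul_mem_pSpan (commutator_mem_bSpan ha hb) hc)
    (mul_mem_pSpan hb (commutator_mem_bSpan ha hc))

theorem bSpan_bSpan_left_le (S T U : Submodule K F) :
    bSpan K (bSpan K S T) U ≤ bSpan K S (bSpan K T U) ⊔ bSpan K T (bSpan K S U) := by
  rw [bSpan_eq_map₂ (bSpan K S T), bSpan_eq_map₂ S T, map₂_map₂_left_le_iff]
  intro a ha b hb c hc
  have jacobi : (a * b - b * a) * c - c * (a * b - b * a) =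
      (a * (b * c - c * b) - (b * c - c * b) * a) -
        (b * (a * c - c * a) - (a * c - c * a) * b) := by
    noncomm_ring
  simp only [commutatorBilin_apply, jacobi]
  exact sub_mem (mem_sup_left (commutator_mem_bSpan ha (commutator_mem_bSpan hb hc)))
    (mem_sup_right (commutator_mem_bSpan hb (commutator_mem_bSpan ha hc)))

theorem bSpan_pSpan_left_le (S T U : Submodule K F) :
    bSpan K (pSpan K S T) U ≤ bSpan K S (pSpan K T U) ⊔ bSpan K T (pSpan K U S) := by
  rw [bSpan_eq_map₂ (pSpan K S T), pSpan_eq_map₂ S T, map₂_map₂_left_le_iff]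
  intro a ha b hb c hc
  have cyclic : a * b * c - c * (a * b) =
      (a * (b * c) - b * c * a) + (b * (c * a) - c * a * b) := by
    noncomm_ring
  rw [LinearMap.mul_apply', commutatorBilin_apply, cyclic]
  exact add_mem_sup (commutator_mem_bSpan ha (mul_mem_pSpan hb hc))
    (commutator_mem_bSpan hb (mul_mem_pSpan hc ha))

end ProductAndCommutatorSpans

section CommutatorProducts

open Finset.HasAntidiagonal (antidiagonal mem_antidiagonal)

variable {K}
variable {F : Type*} [NonUnitalRing F] [Module K F] {S : Submodule K F} {ℓ ℓ' : ℕ}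

theorem IklS_succ (hℓ : 1 ≤ ℓ) (k : ℕ) :
    IklS K S (ℓ + 1) k =
      ⨆ p ∈ antidiagonal k, pSpan K (cSp K S p.1) (IklS K S ℓ p.2) := by
  obtain ⟨m, rfl⟩ := Nat.exists_eq_add_of_le' hℓ
  rw [IklS, ← finsetSum_submodule_eq_iSup, Finset.Nat.sum_antidiagonal_eq_sum_range_succ_mk]

theorem pSpan_cSp_IklS_le (hℓ : 1 ≤ ℓ) (i k : ℕ) :
    pSpan K (cSp K S i) (IklS K S ℓ k) ≤ IklS K S (ℓ + 1) (i + k) := by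
  rw [IklS_succ hℓ]
  exact le_iSup₂_of_le (i, k) (mem_antidiagonal.2 rfl) le_rfl

variable (K S) in
/-- The subspace `I_k^{≤ℓ}(R, S) = Σ_{1 ≤ ℓ' ≤ ℓ} I_k^{ℓ'}(R, S)` attached to an arbitrary subspace
`S`; for `S = ⊤` it is `Ikle`. As for `IklS`, the superscript `ℓ` is the first index. -/
def IkleS (ℓ k : ℕ) : Submodule K F :=
  ∑ ℓ' ∈ Finset.Icc 1 ℓ, IklS K S ℓ' k

theorem IkleS_eq_iSup (ℓ k : ℕ) : IkleS K S ℓ k = ⨆ m ∈ Finset.Icc 1 ℓ, IklS K S m k :=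
  finsetSum_submodule_eq_iSup _ _

theorem IklS_le_IkleS (hℓ : 1 ≤ ℓ) (hℓℓ' : ℓ ≤ ℓ') (k : ℕ) : IklS K S ℓ k ≤ IkleS K S ℓ' k := by
  rw [IkleS_eq_iSup]
  exact le_iSup₂_of_le ℓ (Finset.mem_Icc.2 ⟨hℓ, hℓℓ'⟩) le_rfl

variable [SMulCommClass K F F] [IsScalarTower K F F]

theorem pSpan_IklS_IklS_le (hℓ : 1 ≤ ℓ) (hℓ' : 1 ≤ ℓ') (k k' : ℕ) :
    pSpan K (IklS K S ℓ k) (IklS K S ℓ' k') ≤ IklS K S (ℓ + ℓ') (k + k') := by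
  induction ℓ, hℓ using Nat.le_induction generalizing k with
  | base => simpa only [IklS, add_comm 1] using pSpan_cSp_IklS_le hℓ' k k'
  | succ ℓ hℓ ih =>
    simp only [IklS_succ hℓ, pSpan_iSup_left, iSup_le_iff, Prod.forall, mem_antidiagonal]
    rintro i j rfl
    calc pSpan K (pSpan K (cSp K S i) (IklS K S ℓ j)) (IklS K S ℓ' k')
        ≤ pSpan K (cSp K S i) (pSpan K (IklS K S ℓ j) (IklS K S ℓ' k')) := pSpan_pSpan_le _ _ _
      _ ≤ pSpan K (cSp K S i) (IklS K S (ℓ + ℓ') (j + k')) := pSpan_mono le_rfl (ih j)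
      _ ≤ IklS K S (ℓ + ℓ' + 1) (i + (j + k')) := pSpan_cSp_IklS_le (by omega) _ _
      _ = IklS K S (ℓ + 1 + ℓ') (i + j + k') := by rw [add_right_comm, add_assoc i]

theorem bSpan_IklS_le (hℓ : 1 ≤ ℓ) (k : ℕ) :
    bSpan K S (IklS K S ℓ k) ≤ IklS K S ℓ (k + 1) := by
  induction ℓ, hℓ using Nat.le_induction generalizing k with
  | base => exact le_rfl
  | succ ℓ hℓ ih =>
    rw [IklS_succ hℓ k]
    simp only [bSpan_iSup_right, iSup_le_iff, Prod.forall, mem_antidiagonal]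
    rintro i j rfl
    refine (bSpan_pSpan_right_le _ _ _).trans (sup_le ?_ ?_)
    · calc pSpan K (cSp K S (i + 1)) (IklS K S ℓ j)
          ≤ IklS K S (ℓ + 1) (i + 1 + j) := pSpan_cSp_IklS_le hℓ _ _
        _ = IklS K S (ℓ + 1) (i + j + 1) := by rw [add_right_comm]
    · calc pSpan K (cSp K S i) (bSpan K S (IklS K S ℓ j))
          ≤ pSpan K (cSp K S i) (IklS K S ℓ (j + 1)) := pSpan_mono le_rfl (ih j)
        _ ≤ IklS K S (ℓ + 1) (i + j + 1) := pSpan_cSp_IklS_le hℓ _ _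

theorem bSpan_cSp_IklS_le (hℓ : 1 ≤ ℓ) (j k : ℕ) :
    bSpan K (cSp K S j) (IklS K S ℓ k) ≤ bSpan K S (IklS K S ℓ (j + k)) := by
  induction j generalizing k with
  | zero => rw [zero_add, cSp]
  | succ j ih =>
    refine (bSpan_bSpan_left_le _ _ _).trans (sup_le ?_ ?_)
    · calc bSpan K S (bSpan K (cSp K S j) (IklS K S ℓ k))
          ≤ bSpan K S (bSpan K S (IklS K S ℓ (j + k))) := bSpan_mono le_rfl (ih k)
        _ ≤ bSpan K S (IklS K S ℓ (j + k + 1)) := bSpan_mono le_rfl (bSpan_IklS_le hℓ _)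
        _ = bSpan K S (IklS K S ℓ (j + 1 + k)) := by rw [add_right_comm]
    · calc bSpan K (cSp K S j) (bSpan K S (IklS K S ℓ k))
          ≤ bSpan K (cSp K S j) (IklS K S ℓ (k + 1)) := bSpan_mono le_rfl (bSpan_IklS_le hℓ k)
        _ ≤ bSpan K S (IklS K S ℓ (j + (k + 1))) := ih _
        _ = bSpan K S (IklS K S ℓ (j + 1 + k)) := by rw [add_right_comm, add_assoc]

theorem bSpan_IklS_IklS_le (hℓ : 1 ≤ ℓ) (hℓ' : 1 ≤ ℓ') (k k' : ℕ) :
    bSpan K (IklS K S ℓ k) (IklS K S ℓ' k') ≤ bSpan K S (IklS K S (ℓ + ℓ' - 1) (k + k')) := by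
  induction ℓ, hℓ using Nat.le_induction generalizing k ℓ' k' with
  | base => simpa only [IklS, add_tsub_cancel_left] using bSpan_cSp_IklS_le hℓ' k k'
  | succ ℓ hℓ ih =>
    simp only [IklS_succ hℓ, bSpan_iSup_left, iSup_le_iff, Prod.forall, mem_antidiagonal]
    rintro i j rfl
    refine (bSpan_pSpan_left_le _ _ _).trans (sup_le ?_ ?_)
    · calc bSpan K (cSp K S i) (pSpan K (IklS K S ℓ j) (IklS K S ℓ' k'))
          ≤ bSpan K (cSp K S i) (IklS K S (ℓ + ℓ') (j + k')) :=
            bSpan_mono le_rfl (pSpan_IklS_IklS_le hℓ hℓ' j k')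
        _ ≤ bSpan K S (IklS K S (ℓ + ℓ') (i + (j + k'))) := bSpan_cSp_IklS_le (by omega) _ _
        _ = bSpan K S (IklS K S (ℓ + 1 + ℓ' - 1) (i + j + k')) := by
            rw [add_right_comm, Nat.add_sub_cancel, add_assoc i]
    · calc bSpan K (IklS K S ℓ j) (pSpan K (IklS K S ℓ' k') (cSp K S i))
          ≤ bSpan K (IklS K S ℓ j) (IklS K S (ℓ' + 1) (k' + i)) :=
            bSpan_mono le_rfl (pSpan_IklS_IklS_le hℓ' le_rfl k' i)
        _ ≤ bSpan K S (IklS K S (ℓ + (ℓ' + 1) - 1) (j + (k' + i))) := ih (by omega) _ _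
        _ = bSpan K S (IklS K S (ℓ + 1 + ℓ' - 1) (i + j + k')) := by
            rw [show ℓ + (ℓ' + 1) = ℓ + 1 + ℓ' by omega, show j + (k' + i) = i + j + k' by omega]

theorem pSpan_IkleS_IkleS_le (ℓ ℓ' k k' : ℕ) :
    pSpan K (IkleS K S ℓ k) (IkleS K S ℓ' k') ≤ IkleS K S (ℓ + ℓ') (k + k') := by
  rw [IkleS_eq_iSup ℓ, IkleS_eq_iSup ℓ']
  simp_rw [pSpan_iSup_left, pSpan_iSup_right, iSup_le_iff, Finset.mem_Icc]
  rintro m ⟨hm, hmℓ⟩ m' ⟨hm', hmℓ'⟩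
  exact (pSpan_IklS_IklS_le hm hm' k k').trans (IklS_le_IkleS (by omega) (by omega) _)

theorem bSpan_IkleS_IkleS_le (ℓ ℓ' k k' : ℕ) :
    bSpan K (IkleS K S ℓ k) (IkleS K S ℓ' k') ≤
      bSpan K S (IkleS K S (ℓ + ℓ' - 1) (k + k')) := by
  rw [IkleS_eq_iSup ℓ, IkleS_eq_iSup ℓ']
  simp_rw [bSpan_iSup_left, bSpan_iSup_right, iSup_le_iff, Finset.mem_Icc]
  rintro m ⟨hm, hmℓ⟩ m' ⟨hm', hmℓ'⟩
  exact (bSpan_IklS_IklS_le hm hm' k k').trans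
    (bSpan_mono le_rfl (IklS_le_IkleS (by omega) (by omega) _))

end CommutatorProducts

theorem statement1_general {K : Type*} [Field K]
    {F : Type*} [NonUnitalRing F] [Module K F] [SMulCommClass K F F] [IsScalarTower K F F]
    (S : Submodule K F) (k k' ℓ ℓ' : ℕ) (hℓ : 1 ≤ ℓ) (hℓ' : 1 ≤ ℓ') :
    pSpan K (IklS K S ℓ k) (IklS K S ℓ' k') ≤ IklS K S (ℓ + ℓ') (k + k') ∧
    pSpan K (IkleS K S ℓ k) (IkleS K S ℓ' k') ≤ IkleS K S (ℓ + ℓ') (k + k') ∧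
    bSpan K (IklS K S ℓ k) (IklS K S ℓ' k') ≤ bSpan K S (IklS K S (ℓ + ℓ' - 1) (k + k')) ∧
    bSpan K (IkleS K S ℓ k) (IkleS K S ℓ' k') ≤ bSpan K S (IkleS K S (ℓ + ℓ' - 1) (k + k')) :=
  ⟨pSpan_IklS_IklS_le hℓ hℓ' k k', pSpan_IkleS_IkleS_le _ _ _ _,
    bSpan_IklS_IklS_le hℓ hℓ' k k', bSpan_IkleS_IkleS_le _ _ _ _⟩

/-- products and commutators of the subspaces `I_k^ℓ(F)`, `I_k^{≤ℓ}(F)`. -/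
theorem statement1 {K : Type*} [Field K] [CharZero K]
    {F : Type*} [NonUnitalRing F] [Module K F] [SMulCommClass K F F] [IsScalarTower K F F]
    (k k' ℓ ℓ' : ℕ) (hℓ : 1 ≤ ℓ) (hℓ' : 1 ≤ ℓ') :
    pSpan K (IklS K (⊤ : Submodule K F) ℓ k) (IklS K ⊤ ℓ' k') ≤
      IklS K (⊤ : Submodule K F) (ℓ + ℓ') (k + k') ∧
    pSpan K (Ikle K (R := F) ℓ k) (Ikle K (R := F) ℓ' k') ≤
      Ikle K (R := F) (ℓ + ℓ') (k + k') ∧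
    bSpan K (IklS K (⊤ : Submodule K F) ℓ k) (IklS K ⊤ ℓ' k') ≤
      bSpan K ⊤ (IklS K (⊤ : Submodule K F) (ℓ + ℓ' - 1) (k + k')) ∧
    bSpan K (Ikle K (R := F) ℓ k) (Ikle K (R := F) ℓ' k') ≤
      bSpan K ⊤ (Ikle K (R := F) (ℓ + ℓ' - 1) (k + k')) :=
  statement1_general ⊤ k k' ℓ ℓ' hℓ hℓ'
end

section
/- Let (g,A) be a compatible pair over a field k of characteristic 0 and F an associative k-algebra. Then for all k ≥ 0: (a) F^(k) ⊗ g^{k+1} ⊆ (g,A)(F) and (F·F^(k)) ⊗ [g, g^{k+1}] ⊆ (g,A)(F). -/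
open Submodule TensorProduct

variable (K : Type*) [Field K]

/-!
Write `L = (g, A)(F)`. Bracketing `f ⊗ a` with `h ⊗ w` gives `(f h) ⊗ [a, w] + [f, h] ⊗ w a`, so
both inclusions at level `k` give the first one at level `k + 1`. For the second one at level
`k + 1`, take `h ∈ F^(k)`. Modulo `F^(k+1)` the element `f [u, h]` is antisymmetric in `f` and `u`,
so after dividing by `2` it may be replaced by `s = f [u, h] - u [f, h]`. The brackets above,
antisymmetrised, give `s ⊗ [a, w] + c ⊗ w a ∈ L` with `c = [[f, u], h] ∈ F^(k+1)`. Summed over all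
rotations of a word `a w` in `g`, the commutators cancel, while modulo `L` the terms `c ⊗ w a` all
agree because `[g, g^n] ⊆ g^n`. Dividing by the length of the word, `c ⊗ w a` lies in `L`, and
hence so does `s ⊗ [a, w]`. Up to level `k` the divisors are `2` and the word lengths
`3, …, k + 2`, which accounts for the factorial `(k + 2)!`.
-/

section Words

variable {R A : Type*} [CommRing R] [Ring A] [Algebra R A] {g : Submodule R A}

theorem lie_mem_pow (hg : ∀ x ∈ g, ∀ y ∈ g, ⁅x, y⁆ ∈ g) {n : ℕ} {a w : A} (ha : a ∈ g)
    (hw : w ∈ g ^ n) : ⁅a, w⁆ ∈ g ^ n := by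
  induction hw using Submodule.pow_induction_on_left' with
  | algebraMap r => simp [Ring.lie_def, Algebra.commutes r a]
  | add x y i _ _ hx hy =>
    have lie_add : ⁅a, x + y⁆ = ⁅a, x⁆ + ⁅a, y⁆ := by simp only [Ring.lie_def]; noncomm_ring
    exact lie_add ▸ add_mem hx hy
  | mem_mul x hx i y hy ih =>
    have lie_mul : ⁅a, x * y⁆ = ⁅a, x⁆ * y + x * ⁅a, y⁆ := by
      simp only [Ring.lie_def]; noncomm_ring
    rw [lie_mul, pow_succ']
    exact add_mem (mul_mem_mul (hg a ha x hx) hy) (mul_mem_mul hx ih)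

theorem list_prod_mem_pow_length {l : List A} (hl : ∀ x ∈ l, x ∈ g) : l.prod ∈ g ^ l.length := by
  induction l with
  | nil => exact one_le.1 (pow_zero g).ge
  | cons a l ih =>
    rw [List.forall_mem_cons] at hl
    rw [List.prod_cons, List.length_cons, pow_succ']
    exact mul_mem_mul hl.1 (ih hl.2)

open scoped Pointwise in
theorem pow_le_of_forall_list_prod_mem {n : ℕ} {N : Submodule R A}
    (h : ∀ l : List A, l.length = n → (∀ x ∈ l, x ∈ g) → l.prod ∈ N) : g ^ n ≤ N := by
  rw [pow_eq_span_pow_set, span_le]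
  intro p hp
  obtain ⟨v, rfl⟩ := Set.mem_pow.1 hp
  exact h _ List.length_ofFn (by simp [List.mem_ofFn])

theorem exists_prod_rotate_eq_mul {l : List A} {n : ℕ} (hn : l.length = n + 1)
    (hl : ∀ x ∈ l, x ∈ g) (j : ℕ) :
    ∃ a ∈ g, ∃ w ∈ g ^ n, (l.rotate j).prod = a * w ∧ (l.rotate (j + 1)).prod = w * a := by
  obtain ⟨a, t, hat⟩ : ∃ a t, l.rotate j = a :: t :=
    List.exists_cons_of_length_eq_add_one ((l.length_rotate j).trans hn)
  have hmem : ∀ x ∈ a :: t, x ∈ g := fun x hx ↦ hl x (List.mem_rotate.1 (hat ▸ hx))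
  rw [List.forall_mem_cons] at hmem
  have ht : t.length = n := by simpa [hn] using (congrArg List.length hat).symm
  refine ⟨a, hmem.1, t.prod, ht ▸ list_prod_mem_pow_length hmem.2, by simp [hat], ?_⟩
  rw [← List.rotate_rotate, hat]
  simp

theorem map_eq_zero_of_map_mul_eq_map_lie {M : Type*} [AddCommGroup M] [Module R M] {n : ℕ}
    (hn : IsUnit ((n + 1 : ℕ) : R)) {φ ψ : A →ₗ[R] M} (hψ : ∀ a ∈ g, ∀ w ∈ g ^ n, ψ ⁅a, w⁆ = 0)
    (hφ : ∀ a ∈ g, ∀ w ∈ g ^ n, ψ (w * a) = φ ⁅w, a⁆) {x : A} (hx : x ∈ g ^ (n + 1)) :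
    ψ x = 0 := by
  refine pow_le_of_forall_list_prod_mem (N := LinearMap.ker ψ) (fun l hlen hl ↦ ?_) hx
  have hrotate (j : ℕ) : ψ (l.rotate j).prod = ψ l.prod := by
    induction j with
    | zero => simp
    | succ j ih =>
      obtain ⟨a, ha, w, hw, hj, hj'⟩ := exists_prod_rotate_eq_mul hlen hl j
      rw [← ih, hj, hj', eq_comm, ← sub_eq_zero, ← map_sub]
      exact hψ a ha w hw
  have hdiff (j : ℕ) : ψ (l.rotate (j + 1)).prod
      = φ (l.rotate (j + 1)).prod - φ (l.rotate j).prod := by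
    obtain ⟨a, ha, w, hw, hj, hj'⟩ := exists_prod_rotate_eq_mul hlen hl j
    rw [hj, hj', hφ a ha w hw, Ring.lie_def, map_sub]
  rw [LinearMap.mem_ker, ← hn.smul_eq_zero]
  calc ((n + 1 : ℕ) : R) • ψ l.prod
      = ∑ j ∈ Finset.range (n + 1), ψ (l.rotate (j + 1)).prod := by
        simp [hrotate, ← Nat.cast_smul_eq_nsmul R]
    _ = ∑ j ∈ Finset.range (n + 1), (φ (l.rotate (j + 1)).prod - φ (l.rotate j).prod) :=
        Finset.sum_congr rfl fun j _ ↦ hdiff j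
    _ = φ (l.rotate (n + 1)).prod - φ (l.rotate 0).prod :=
        Finset.sum_range_sub (fun j ↦ φ (l.rotate j).prod) _
    _ = 0 := by rw [← hlen, List.rotate_length, List.rotate_zero, sub_self]

end Words

variable {K}

theorem gPow_succ_eq_pow {A : Type*} [Ring A] [Algebra K A] (g : Submodule K A) (n : ℕ) :
    gPow K g (n + 1) = g ^ (n + 1) := by
  induction n with
  | zero => simp [gPow]
  | succ n ih =>
    rw [pow_succ', ← ih, mul_eq_span_mul_set]
    simp only [gPow, pSpan, ← Set.image2_mul, Set.image2, SetLike.mem_coe, eq_comm]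

section CommutatorSpaces

variable {R : Type*} [NonUnitalRing R] [Module K R]

theorem lie_mem_bSpan {S T : Submodule K R} {a b : R} (ha : a ∈ S) (hb : b ∈ T) :
    ⁅a, b⁆ ∈ bSpan K S T :=
  subset_span ⟨a, ha, b, hb, rfl⟩

theorem bSpan_le {S T U : Submodule K R} : bSpan K S T ≤ U ↔ ∀ a ∈ S, ∀ b ∈ T, ⁅a, b⁆ ∈ U := by
  refine ⟨fun h a ha b hb ↦ h (lie_mem_bSpan ha hb), fun h ↦ span_le.2 ?_⟩
  rintro _ ⟨a, ha, b, hb, rfl⟩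
  exact h a ha b hb

theorem cSp_antitone {S : Submodule K R} (hS : bSpan K S S ≤ S) : Antitone (cSp K S) := by
  refine antitone_nat_of_succ_le fun k ↦ ?_
  induction k with
  | zero => exact hS
  | succ k ih => exact bSpan_le.2 fun a ha b hb ↦ lie_mem_bSpan ha (ih hb)

theorem lie_mem_cSp_succ {k : ℕ} (f : R) {h : R} (hh : h ∈ cSp K (⊤ : Submodule K R) k) :
    ⁅f, h⁆ ∈ cSp K (⊤ : Submodule K R) (k + 1) :=
  lie_mem_bSpan mem_top hh

theorem mul_lie_add_mul_lie_mem_cSp_succ {k : ℕ} (f u : R) {h : R}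
    (hh : h ∈ cSp K (⊤ : Submodule K R) k) :
    f * ⁅u, h⁆ + u * ⁅f, h⁆ ∈ cSp K (⊤ : Submodule K R) (k + 1) := by
  have key : f * ⁅u, h⁆ + u * ⁅f, h⁆ = ⁅f * u, h⁆ + ⁅u, ⁅f, h⁆⁆ := by
    simp only [Ring.lie_def]; noncomm_ring
  rw [key]
  exact add_mem (lie_mem_cSp_succ _ hh)
    (cSp_antitone le_top (k + 1).le_succ (lie_mem_cSp_succ _ (lie_mem_cSp_succ _ hh)))

end CommutatorSpaces

section TensorSpans

variable {F A : Type*} [AddCommGroup F] [Module K F] [AddCommGroup A] [Module K A]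

theorem tSpan_le {S : Submodule K F} {T : Submodule K A} {L : Submodule K (F ⊗[K] A)} :
    tSpan K S T ≤ L ↔ ∀ f ∈ S, ∀ a ∈ T, f ⊗ₜ[K] a ∈ L := by
  refine ⟨fun h f hf a ha ↦ h (subset_span ⟨f, hf, a, ha, rfl⟩), fun h ↦ span_le.2 ?_⟩
  rintro _ ⟨f, hf, a, ha, rfl⟩
  exact h f hf a ha

theorem tSpan_span_span_le {s : Set F} {t : Set A} {L : Submodule K (F ⊗[K] A)} :
    tSpan K (span K s) (span K t) ≤ L ↔ ∀ f ∈ s, ∀ a ∈ t, f ⊗ₜ[K] a ∈ L := by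
  rw [tSpan_le]
  change (∀ f ∈ span K s, ∀ a ∈ span K t, TensorProduct.mk K F A f a ∈ L) ↔ _
  rw [← map₂_le, map₂_span_span, span_le, Set.image2_subset_iff]
  rfl

theorem tSpan_mono {S S' : Submodule K F} {T T' : Submodule K A} (hS : S ≤ S') (hT : T ≤ T') :
    tSpan K S T ≤ tSpan K S' T' :=
  tSpan_le.2 fun _ hf _ ha ↦ tSpan_le.1 le_rfl _ (hS hf) _ (hT ha)

end TensorSpans

section LieGen

variable {R : Type*} [NonUnitalRing R] [Module K R] {S : Submodule K R}

theorem le_lieGen : S ≤ lieGen K S :=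
  le_sInf fun _ hT ↦ hT.1

theorem lie_mem_lieGen {x y : R} (hx : x ∈ lieGen K S) (hy : y ∈ lieGen K S) :
    ⁅x, y⁆ ∈ lieGen K S :=
  mem_sInf.2 fun T hT ↦ hT.2 x (mem_sInf.1 hx T hT) y (mem_sInf.1 hy T hT)

end LieGen

section CurrentLie

variable {F : Type*} [NonUnitalRing F] [Module K F] [SMulCommClass K F F] [IsScalarTower K F F]
  {A : Type*} [Ring A] [Algebra K A] {g : Submodule K A}

theorem lie_tmul_tmul (f h : F) (a w : A) :
    ⁅f ⊗ₜ[K] a, h ⊗ₜ[K] w⁆ = (f * h) ⊗ₜ[K] ⁅a, w⁆ + ⁅f, h⁆ ⊗ₜ[K] (w * a) := by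
  simp only [Ring.lie_def, Algebra.TensorProduct.tmul_mul_tmul, tmul_sub, sub_tmul]
  abel

theorem mul_tmul_lie_add_lie_tmul_mul_mem_currentLie (f : F) {h : F} {a w : A} (ha : a ∈ g)
    (hw : h ⊗ₜ[K] w ∈ currentLie K (F := F) g) :
    (f * h) ⊗ₜ[K] ⁅a, w⁆ + ⁅f, h⁆ ⊗ₜ[K] (w * a) ∈ currentLie K (F := F) g :=
  lie_tmul_tmul (K := K) f h a w ▸ lie_mem_lieGen (tSpan_le.1 le_lieGen f mem_top a ha) hw

theorem tSpan_cSp_succ_pow_succ_le_currentLie {k n : ℕ}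
    (hcomm : tSpan K (cSp K (⊤ : Submodule K F) k) (g ^ n) ≤ currentLie K (F := F) g)
    (hprod : tSpan K (pSpan K (⊤ : Submodule K F) (cSp K ⊤ k)) (bSpan K g (g ^ n)) ≤
      currentLie K (F := F) g) :
    tSpan K (cSp K (⊤ : Submodule K F) (k + 1)) (g ^ (n + 1)) ≤ currentLie K (F := F) g := by
  rw [pow_succ, mul_eq_span_mul_set]
  refine tSpan_span_span_le.2 ?_
  rintro _ ⟨f, -, h, hh, rfl⟩ _ ⟨w, hw, a, ha, rfl⟩
  have hbracket := mul_tmul_lie_add_lie_tmul_mul_mem_currentLie f ha (tSpan_le.1 hcomm h hh w hw)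
  exact ((currentLie K g).add_mem_iff_right
    (tSpan_span_span_le.1 hprod _ ⟨f, mem_top, h, hh, rfl⟩ _ ⟨a, ha, w, hw, rfl⟩)).1 hbracket

theorem mul_lie_sub_mul_lie_tmul_lie_add_mem_currentLie {k n : ℕ}
    (hcomm : tSpan K (cSp K (⊤ : Submodule K F) (k + 1)) (g ^ n) ≤ currentLie K (F := F) g)
    (f u : F) {h : F} (hh : h ∈ cSp K (⊤ : Submodule K F) k) {a w : A} (ha : a ∈ g)
    (hw : w ∈ g ^ n) :
    (f * ⁅u, h⁆ - u * ⁅f, h⁆) ⊗ₜ[K] ⁅a, w⁆ + ⁅⁅f, u⁆, h⁆ ⊗ₜ[K] (w * a) ∈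
      currentLie K (F := F) g := by
  have hf := mul_tmul_lie_add_lie_tmul_mul_mem_currentLie f ha
    (tSpan_le.1 hcomm _ (lie_mem_cSp_succ u hh) w hw)
  have hu := mul_tmul_lie_add_lie_tmul_mul_mem_currentLie u ha
    (tSpan_le.1 hcomm _ (lie_mem_cSp_succ f hh) w hw)
  have jacobi : ⁅⁅f, u⁆, h⁆ = ⁅f, ⁅u, h⁆⁆ - ⁅u, ⁅f, h⁆⁆ := by
    simp only [Ring.lie_def]; noncomm_ring
  convert sub_mem hf hu using 1
  rw [jacobi, sub_tmul, sub_tmul]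
  abel

theorem lie_lie_tmul_mem_currentLie (hg : ∀ x ∈ g, ∀ y ∈ g, ⁅x, y⁆ ∈ g) {k n : ℕ}
    (hn : ((n + 1 : ℕ) : K) ≠ 0)
    (hcomm : tSpan K (cSp K (⊤ : Submodule K F) (k + 1)) (g ^ n) ≤ currentLie K (F := F) g)
    (f u : F) {h : F} (hh : h ∈ cSp K (⊤ : Submodule K F) k) {x : A} (hx : x ∈ g ^ (n + 1)) :
    ⁅⁅f, u⁆, h⁆ ⊗ₜ[K] x ∈ currentLie K (F := F) g := by
  let L := currentLie K (F := F) g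
  let φ : A →ₗ[K] (F ⊗[K] A) ⧸ L := L.mkQ ∘ₗ TensorProduct.mk K F A (f * ⁅u, h⁆ - u * ⁅f, h⁆)
  let ψ : A →ₗ[K] (F ⊗[K] A) ⧸ L := L.mkQ ∘ₗ TensorProduct.mk K F A ⁅⁅f, u⁆, h⁆
  have hψ : ∀ a ∈ g, ∀ w ∈ g ^ n, ψ ⁅a, w⁆ = 0 := fun a ha w hw ↦
    (Quotient.mk_eq_zero L).2
      (tSpan_le.1 hcomm _ (lie_mem_cSp_succ _ hh) _ (lie_mem_pow hg ha hw))
  have hφ : ∀ a ∈ g, ∀ w ∈ g ^ n, ψ (w * a) = φ ⁅w, a⁆ := fun a ha w hw ↦ by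
    refine (Submodule.Quotient.eq L).2 ?_
    convert mul_lie_sub_mul_lie_tmul_lie_add_mem_currentLie hcomm f u hh ha hw using 1
    simp only [TensorProduct.mk_apply, Ring.lie_def w a, Ring.lie_def a w, tmul_sub]
    abel
  exact (Quotient.mk_eq_zero L).1 (map_eq_zero_of_map_mul_eq_map_lie hn.isUnit hψ hφ hx)

theorem mul_lie_tmul_lie_mem_currentLie (hg : ∀ x ∈ g, ∀ y ∈ g, ⁅x, y⁆ ∈ g)
    (htwo : (2 : K) ≠ 0) {k n : ℕ} (hn : ((n + 1 : ℕ) : K) ≠ 0)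
    (hcomm : tSpan K (cSp K (⊤ : Submodule K F) (k + 1)) (g ^ n) ≤ currentLie K (F := F) g)
    (f u : F) {h : F} (hh : h ∈ cSp K (⊤ : Submodule K F) k) {a w : A} (ha : a ∈ g)
    (hw : w ∈ g ^ n) :
    (f * ⁅u, h⁆) ⊗ₜ[K] ⁅a, w⁆ ∈ currentLie K (F := F) g := by
  have hwa : w * a ∈ g ^ (n + 1) := pow_succ g n ▸ mul_mem_mul hw ha
  have hanti : (f * ⁅u, h⁆ - u * ⁅f, h⁆) ⊗ₜ[K] ⁅a, w⁆ ∈ currentLie K (F := F) g :=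
    ((currentLie K g).add_mem_iff_left
      (lie_lie_tmul_mem_currentLie hg hn hcomm f u hh hwa)).1
      (mul_lie_sub_mul_lie_tmul_lie_add_mem_currentLie hcomm f u hh ha hw)
  have hsym : (f * ⁅u, h⁆ + u * ⁅f, h⁆) ⊗ₜ[K] ⁅a, w⁆ ∈ currentLie K (F := F) g :=
    tSpan_le.1 hcomm _ (mul_lie_add_mul_lie_mem_cSp_succ f u hh) _ (lie_mem_pow hg ha hw)
  rw [← (currentLie K g).smul_mem_iff htwo]
  convert add_mem hanti hsym using 1
  rw [← add_tmul, smul_tmul', two_smul]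
  abel_nf

theorem tSpan_pSpan_cSp_succ_le_currentLie (hg : ∀ x ∈ g, ∀ y ∈ g, ⁅x, y⁆ ∈ g)
    (htwo : (2 : K) ≠ 0) {k n : ℕ} (hn : ((n + 1 : ℕ) : K) ≠ 0)
    (hcomm : tSpan K (cSp K (⊤ : Submodule K F) (k + 1)) (g ^ n) ≤ currentLie K (F := F) g) :
    tSpan K (pSpan K (⊤ : Submodule K F) (cSp K ⊤ (k + 1))) (bSpan K g (g ^ n)) ≤
      currentLie K (F := F) g := by
  refine tSpan_span_span_le.2 ?_
  rintro _ ⟨f, -, h', hh', rfl⟩ _ ⟨a, ha, w, hw, rfl⟩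
  have hle : cSp K (⊤ : Submodule K F) (k + 1) ≤ (currentLie K (F := F) g).comap
      ((TensorProduct.mk K F A).flip ⁅a, w⁆ ∘ₗ LinearMap.mulLeft K f) :=
    bSpan_le.2 fun u _ h hh ↦ mul_lie_tmul_lie_mem_currentLie hg htwo hn hcomm f u hh ha hw
  exact hle hh'

end CurrentLie

theorem statement3_general {F : Type*} [NonUnitalRing F] [Module K F] [SMulCommClass K F F]
    [IsScalarTower K F F] {A : Type*} [Ring A] [Algebra K A]
    (g : Submodule K A) (hg : ∀ x ∈ g, ∀ y ∈ g, x * y - y * x ∈ g) (k : ℕ)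
    (hk : ((k + 2).factorial : K) ≠ 0) :
    tSpan K (cSp K (⊤ : Submodule K F) k) (gPow K g (k + 1)) ≤ currentLie K (F := F) g ∧
    tSpan K (pSpan K (⊤ : Submodule K F) (cSp K ⊤ k)) (bSpan K g (gPow K g (k + 1))) ≤
      currentLie K (F := F) g := by
  simp only [gPow_succ_eq_pow]
  induction k with
  | zero =>
    simp only [zero_add, pow_one]
    exact ⟨le_lieGen, (tSpan_mono le_top (bSpan_le.2 hg)).trans le_lieGen⟩
  | succ k ih =>
    rw [Nat.factorial_succ, Nat.cast_mul, mul_ne_zero_iff] at hk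
    have htwo : (2 : K) ≠ 0 := fun h ↦ hk.2 <| by
      obtain ⟨m, hm⟩ : 2 ∣ (k + 2).factorial := Nat.dvd_factorial two_pos (Nat.le_add_left 2 k)
      simp [hm, h]
    obtain ⟨hcomm, hprod⟩ := ih hk.2
    have hcomm' := tSpan_cSp_succ_pow_succ_le_currentLie hcomm hprod
    exact ⟨hcomm', tSpan_pSpan_cSp_succ_le_currentLie hg htwo hk.1 hcomm'⟩

/-- `F^(k) ⊗ g^{k+1} ⊆ (g,A)(F)` and `(F·F^(k)) ⊗ [g, g^{k+1}] ⊆ (g,A)(F)`. -/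
theorem statement3 {K : Type*} [Field K] [CharZero K]
    {F : Type*} [NonUnitalRing F] [Module K F] [SMulCommClass K F F] [IsScalarTower K F F]
    {A : Type*} [Ring A] [Algebra K A]
    (g : Submodule K A) (hg : ∀ x ∈ g, ∀ y ∈ g, x * y - y * x ∈ g) (k : ℕ) :
    tSpan K (cSp K (⊤ : Submodule K F) k) (gPow K g (k + 1)) ≤ currentLie K (F := F) g ∧
    tSpan K (pSpan K (⊤ : Submodule K F) (cSp K ⊤ k)) (bSpan K g (gPow K g (k + 1))) ≤
      currentLie K (F := F) g := by
  exact statement3_general g hg k (Nat.cast_ne_zero.2 (Nat.factorial_ne_zero _))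
end
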